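/- arXiv:2210.17278 — 2 statements merged into one kernel-verified Lean document; each statement's English description precedes it below -/
import Mathlib

section
/- Let (X,τ) be a topological space and 𝒫 a primal on X, and let σ = {A ⊆ X : A ⊆ Ψ(A)}. Then σ is a topology on X (it contains ∅ and X, and is closed under finite intersections and arbitrary unions), and moreover σ coincides with the primal topology τ⋄, i.e., A ⊆ Ψ(A) if and only if (X \ A)⋄ ⊆ X \ A. -/
open Set

/-- A collection `P` of subsets of `X` is a *primal* on `X`. -/
structure IsSetPrimal {X : Type*} (P : Set (Set X)) : Prop where
  univ_not_mem : Set.univ ∉ P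
  mem_of_subset : ∀ {A B : Set X}, A ∈ P → B ⊆ A → B ∈ P
  mem_or_mem_of_inter_mem : ∀ {A B : Set X}, A ∩ B ∈ P → A ∈ P ∨ B ∈ P

/-- The primal-diamond operator: `A⋄ = {x | ∀ open U ∋ x, Aᶜ ∪ Uᶜ ∈ P}`. -/
def primalDiamond {X : Type*} [TopologicalSpace X] (P : Set (Set X)) (A : Set X) : Set X :=
  {x | ∀ U : Set X, IsOpen U → x ∈ U → Aᶜ ∪ Uᶜ ∈ P}

/-- The `Ψ` operator: `Ψ(A) = {x | ∃ open U ∋ x, (U \ A)ᶜ ∉ P}`. -/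
def primalPsi {X : Type*} [TopologicalSpace X] (P : Set (Set X)) (A : Set X) : Set X :=
  {x | ∃ U : Set X, IsOpen U ∧ x ∈ U ∧ (U \ A)ᶜ ∉ P}

/-- The topology is *suitable* for the primal `P` if `Aᶜ ∪ A⋄ ∉ P` for all `A`. -/
def SuitableForPrimal {X : Type*} [TopologicalSpace X] (P : Set (Set X)) : Prop :=
  ∀ A : Set X, Aᶜ ∪ primalDiamond P A ∉ P

theorem primalPsi_mono {X : Type*} [TopologicalSpace X] {P : Set (Set X)} (hP : IsSetPrimal P)
    {A B : Set X} (h : A ⊆ B) : primalPsi P A ⊆ primalPsi P B := by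
  rintro x ⟨U, hU, hx, hUA⟩
  exact ⟨U, hU, hx, fun hUB => hUA <|
    hP.mem_of_subset hUB (compl_subset_compl.2 (sdiff_subset_sdiff_right h))⟩

theorem inter_primalPsi_subset {X : Type*} [TopologicalSpace X] {P : Set (Set X)}
    (hP : IsSetPrimal P) (A B : Set X) :
    primalPsi P A ∩ primalPsi P B ⊆ primalPsi P (A ∩ B) := by
  rintro x ⟨⟨U, hU, hxU, hUA⟩, ⟨V, hV, hxV, hVB⟩⟩
  refine ⟨U ∩ V, hU.inter hV, ⟨hxU, hxV⟩, fun h => ?_⟩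
  have hsub : (U \ A)ᶜ ∩ (V \ B)ᶜ ⊆ ((U ∩ V) \ (A ∩ B))ᶜ := by
    intro y
    simp only [mem_inter_iff, mem_compl_iff, mem_sdiff]
    tauto
  exact (hP.mem_or_mem_of_inter_mem (hP.mem_of_subset h hsub)).elim hUA hVB

theorem primalPsi_eq_compl_primalDiamond_compl {X : Type*} [TopologicalSpace X]
    (P : Set (Set X)) (A : Set X) : primalPsi P A = (primalDiamond P Aᶜ)ᶜ := by
  ext x
  have h (U : Set X) : (U \ A)ᶜ = Aᶜᶜ ∪ Uᶜ := by
    rw [sdiff_eq, compl_inter, union_comm]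
  simp only [primalPsi, primalDiamond, mem_ofPred_eq, mem_compl_iff, h]
  push Not
  rfl

theorem stmt_14 {X : Type*} [TopologicalSpace X] (P : Set (Set X)) (hP : IsSetPrimal P) :
    ((∅ : Set X) ⊆ primalPsi P ∅) ∧
    ((Set.univ : Set X) ⊆ primalPsi P Set.univ) ∧
    (∀ A B : Set X, A ⊆ primalPsi P A → B ⊆ primalPsi P B →
      A ∩ B ⊆ primalPsi P (A ∩ B)) ∧
    (∀ S : Set (Set X), (∀ A ∈ S, A ⊆ primalPsi P A) → ⋃₀ S ⊆ primalPsi P (⋃₀ S)) ∧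
    (∀ A : Set X, A ⊆ primalPsi P A ↔ primalDiamond P Aᶜ ⊆ Aᶜ) := by
  refine ⟨empty_subset _, fun x _ => ⟨univ, isOpen_univ, mem_univ x, ?_⟩, fun A B hA hB => ?_,
    fun S hS => ?_, fun A => ?_⟩
  · simpa using hP.univ_not_mem
  · exact (inter_subset_inter hA hB).trans (inter_primalPsi_subset hP A B)
  · exact sUnion_subset fun A hA =>
      (hS A hA).trans (primalPsi_mono hP (subset_sUnion_of_mem hA))
  · rw [primalPsi_eq_compl_primalDiamond_compl, subset_compl_comm]
end

section
/- Let (X,τ) be a topological space and 𝒫 a primal on X. The following are equivalent: (1) τ is suitable for 𝒫, i.e., Aᶜ ∪ A⋄ ∉ 𝒫 for all A ⊆ X; (2) for every τ⋄-closed subset A of X (i.e., A⋄ ⊆ A), Aᶜ ∪ A⋄ ∉ 𝒫; (3) for every A ⊆ X, if for each x ∈ A there exists an open set Uₓ containing x with Uₓᶜ ∪ Aᶜ ∉ 𝒫, then Aᶜ ∉ 𝒫; (4) for every A ⊆ X, if A ∩ A⋄ = ∅ then Aᶜ ∉ 𝒫. -/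
open Set

theorem primalDiamond_mono {X : Type*} [TopologicalSpace X] {P : Set (Set X)}
    (hP : IsSetPrimal P) {A B : Set X} (h : A ⊆ B) : primalDiamond P A ⊆ primalDiamond P B :=
  fun _ hx U hU hxU =>
    hP.mem_of_subset (hx U hU hxU) (union_subset_union_left _ (compl_subset_compl.2 h))

theorem primalDiamond_union_self_subset {X : Type*} [TopologicalSpace X] (P : Set (Set X))
    (A : Set X) : primalDiamond P (A ∪ primalDiamond P A) ⊆ primalDiamond P A := by
  intro x hx U hU hxU
  by_contra hAU
  have hdisj : ∀ y ∈ U, y ∉ primalDiamond P A := fun y hyU hy => hAU (hy U hU hyU)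
  have heq : (A ∪ primalDiamond P A)ᶜ ∪ Uᶜ = Aᶜ ∪ Uᶜ := by
    ext y
    have := hdisj y
    simp only [mem_union, mem_compl_iff]
    tauto
  exact hAU (heq ▸ hx U hU hxU)

theorem inter_primalDiamond_eq_empty_iff {X : Type*} [TopologicalSpace X] (P : Set (Set X))
    (A : Set X) : A ∩ primalDiamond P A = ∅ ↔
      ∀ x ∈ A, ∃ U : Set X, IsOpen U ∧ x ∈ U ∧ Uᶜ ∪ Aᶜ ∉ P := by
  simp [← disjoint_iff_inter_eq_empty, disjoint_left, primalDiamond, union_comm]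

theorem stmt_15 {X : Type*} [TopologicalSpace X] (P : Set (Set X)) (hP : IsSetPrimal P) :
    List.TFAE
      [ SuitableForPrimal P,
        ∀ A : Set X, primalDiamond P A ⊆ A → Aᶜ ∪ primalDiamond P A ∉ P,
        ∀ A : Set X, (∀ x ∈ A, ∃ U : Set X, IsOpen U ∧ x ∈ U ∧ Uᶜ ∪ Aᶜ ∉ P) → Aᶜ ∉ P,
        ∀ A : Set X, A ∩ primalDiamond P A = ∅ → Aᶜ ∉ P ] := by
  tfae_have 1 → 2 := fun h A _ => h A
  tfae_have 2 → 4 := by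
    intro h A hA hAP
    have hsub := primalDiamond_union_self_subset P A
    refine h (A ∪ primalDiamond P A) (hsub.trans subset_union_right)
      (hP.mem_of_subset hAP (union_subset (compl_subset_compl.2 subset_union_left) ?_))
    exact fun x hx hxA => (hA ▸ ⟨hxA, hsub hx⟩ : x ∈ (∅ : Set X))
  tfae_have 4 → 1 := by
    intro h A
    have heq : (A \ primalDiamond P A)ᶜ = Aᶜ ∪ primalDiamond P A := by
      rw [Set.sdiff_eq, compl_inter, compl_compl]
    rw [← heq]
    refine h _ (eq_empty_of_forall_notMem fun x hx => hx.1.2 ?_)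
    exact primalDiamond_mono hP Set.sdiff_subset hx.2
  tfae_have 3 ↔ 4 := by
    simp only [inter_primalDiamond_eq_empty_iff]
  tfae_finish
end
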